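/- Let S = ⟨S, δ, L⟩ and S' = ⟨S', δ', L'⟩ be FLTSs that are witnessed w.r.t. f∃ΔPDL and modally saturated w.r.t. f∃ΔK^0, and let x ∈ S, x' ∈ S'. Then the following are equivalent: (i) φ^S(x) ≤ φ^S'(x') for all formulas φ of f∃ΔPDL; (ii) there exists a crisp simulation Z between S and S' with Z(x,x'); (iii) φ^S(x) ≤ φ^S'(x') for all formulas φ of f∃ΔK^0. -/

import Mathlib

open unitInterval

noncomputable section
attribute [local instance] Classical.propDecidable

instance : Fact ((0:ℝ) ≤ 1) := ⟨zero_le_one⟩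

/-- A left-continuous t-norm on the unit interval `[0,1]`: a commutative, associative
binary operation with neutral element `1`, increasing in both arguments, that
distributes over suprema of nonempty sets (left-continuity). -/
structure Tnorm where
  mul : I → I → I
  mul_comm : ∀ x y, mul x y = mul y x
  mul_assoc : ∀ x y z, mul (mul x y) z = mul x (mul y z)
  mul_one : ∀ x, mul x 1 = x
  mul_le_mul : ∀ {a b c d : I}, a ≤ b → c ≤ d → mul a c ≤ mul b d
  left_continuous : ∀ (x : I) (s : Set I), s.Nonempty → mul x (sSup s) = sSup (mul x '' s)

/-- The residuum of a t-norm: `(x ⇒ y) = sup {z | z ⊗ x ≤ y}`. -/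
def Tnorm.res (T : Tnorm) (x y : I) : I := sSup {z : I | T.mul z x ≤ y}

/-- A fuzzy labeled transition system over actions `A`, propositions `P`, states `St`. -/
structure FLTS (A P St : Type) where
  delta : St → A → St → I
  label : St → P → I

/-- A crisp simulation between two FLTSs. -/
def IsSimulation {A P S S' : Type} (M : FLTS A P S) (M' : FLTS A P S')
    (Z : S → S' → Prop) : Prop :=
  (∀ x x', Z x x' → ∀ p, M.label x p ≤ M'.label x' p) ∧
  (∀ x y x' (ρ : A), Z x x' → 0 < M.delta x ρ y →
    ∃ y', M.delta x ρ y ≤ M'.delta x' ρ y' ∧ Z y y')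
mutual
/-- Formulas of f∃ΔPDL. -/
inductive EForm (A P : Type) : Type
  | const : I → EForm A P
  | prop : P → EForm A P
  | baaz : EForm A P → EForm A P
  | and : EForm A P → EForm A P → EForm A P
  | or : EForm A P → EForm A P → EForm A P
  | impl : I → EForm A P → EForm A P
  | dia : EProg A P → EForm A P → EForm A P
/-- Programs of f∃ΔPDL. -/
inductive EProg (A P : Type) : Type
  | act : A → EProg A P
  | comp : EProg A P → EProg A P → EProg A P
  | union : EProg A P → EProg A P → EProg A P
  | star : EProg A P → EProg A P
  | test : EForm A P → EProg A P
end

/-- The ⊗-product of the values of `r` along the path `x :: l`. -/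
def chainProd (T : Tnorm) {St : Type} (r : St → St → I) : St → List St → I
  | _, [] => 1
  | x, y :: l => T.mul (r x y) (chainProd T r y l)

mutual
/-- Semantics of f∃ΔPDL formulas. -/
def eformSem (T : Tnorm) {A P St : Type} (M : FLTS A P St) : EForm A P → St → I
  | .const a, _ => a
  | .prop p, x => M.label x p
  | .baaz φ, x => if eformSem T M φ x = 1 then 1 else 0
  | .and φ ψ, x => min (eformSem T M φ x) (eformSem T M ψ x)
  | .or φ ψ, x => max (eformSem T M φ x) (eformSem T M ψ x)
  | .impl a φ, x => T.res a (eformSem T M φ x)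
  | .dia α φ, x => ⨆ y, T.mul (eprogSem T M α x y) (eformSem T M φ y)
/-- Semantics of f∃ΔPDL programs. -/
def eprogSem (T : Tnorm) {A P St : Type} (M : FLTS A P St) : EProg A P → St → St → I
  | .act ρ, x, y => M.delta x ρ y
  | .comp α β, x, y => ⨆ z, T.mul (eprogSem T M α x z) (eprogSem T M β z y)
  | .union α β, x, y => max (eprogSem T M α x y) (eprogSem T M β x y)
  | .star α, x, y =>
      sSup {v : I | ∃ l : List St, l.getLastD x = y ∧ v = chainProd T (eprogSem T M α) x l}
  | .test φ, x, y => if x = y then eformSem T M φ x else 0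
end

/-- An FLTS is witnessed w.r.t. f∃ΔPDL: every supremum occurring in the semantic
clauses (for `⟨α⟩φ`, `α∘β` and `α*`) is attained by a greatest element. -/
def WitnessedE (T : Tnorm) {A P St : Type} (M : FLTS A P St) : Prop :=
  (∀ (α : EProg A P) (φ : EForm A P) (x : St), ∃ y : St, ∀ z : St,
      T.mul (eprogSem T M α x z) (eformSem T M φ z) ≤
        T.mul (eprogSem T M α x y) (eformSem T M φ y)) ∧
  (∀ (α β : EProg A P) (x y : St), ∃ z : St, ∀ w : St,
      T.mul (eprogSem T M α x w) (eprogSem T M β w y) ≤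
        T.mul (eprogSem T M α x z) (eprogSem T M β z y)) ∧
  (∀ (α : EProg A P) (x y : St), ∃ l : List St, l.getLastD x = y ∧
      ∀ l' : List St, l'.getLastD x = y →
        chainProd T (eprogSem T M α) x l' ≤ chainProd T (eprogSem T M α) x l)

/-- Formulas of f∃ΔK^0. -/
inductive KForm (A P : Type) : Type
  | prop : P → KForm A P
  | baaz : KForm A P → KForm A P
  | and : KForm A P → KForm A P → KForm A P
  | impl : I → KForm A P → KForm A P
  | dia : A → KForm A P → KForm A P

/-- Semantics of f∃ΔK^0 formulas. -/
def kSem (T : Tnorm) {A P St : Type} (M : FLTS A P St) : KForm A P → St → I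
  | .prop p, x => M.label x p
  | .baaz φ, x => if kSem T M φ x = 1 then 1 else 0
  | .and φ ψ, x => min (kSem T M φ x) (kSem T M ψ x)
  | .impl a φ, x => T.res a (kSem T M φ x)
  | .dia ρ φ, x => ⨆ y, T.mul (M.delta x ρ y) (kSem T M φ y)

/-- An FLTS is witnessed w.r.t. f∃ΔK^0: the supremum in the semantic clause for
`⟨ϱ⟩φ` is always attained by a greatest element. -/
def WitnessedK (T : Tnorm) {A P St : Type} (M : FLTS A P St) : Prop :=
  ∀ (φ : KForm A P) (ρ : A) (x : St), ∃ y : St, ∀ z : St,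
    T.mul (M.delta x ρ z) (kSem T M φ z) ≤ T.mul (M.delta x ρ y) (kSem T M φ y)

/-- An FLTS is modally saturated w.r.t. f∃ΔK^0. Here `Ψ.inf (fun φ => kSem T M φ y)`
is the value of the conjunction `⋀Ψ` at `y` (the empty conjunction has value `1 = ⊤`). -/
def ModallySaturated (T : Tnorm) {A P St : Type} (M : FLTS A P St) : Prop :=
  ∀ (x : St) (a : I) (ρ : A) (Γ : Set (KForm A P)), 0 < a → Γ.Infinite →
    (∀ Ψ : Finset (KForm A P), ↑Ψ ⊆ Γ →
      ∃ y : St, a ≤ T.mul (M.delta x ρ y) (Ψ.inf fun φ => kSem T M φ y)) →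
    ∃ y : St, a ≤ M.delta x ρ y ∧ ∀ φ ∈ Γ, 0 < kSem T M φ y

theorem Tnorm.mul_le_left' (T : Tnorm) (a b : I) : T.mul a b ≤ a := by
  have h := T.mul_le_mul (le_refl a) (show b ≤ 1 from unitInterval.le_one')
  rwa [T.mul_one] at h

theorem Tnorm.mul_le_right' (T : Tnorm) (a b : I) : T.mul a b ≤ b := by
  rw [T.mul_comm]; exact T.mul_le_left' b a

theorem Tnorm.res_mono (T : Tnorm) (a : I) {b c : I} (h : b ≤ c) : T.res a b ≤ T.res a c :=
  sSup_le_sSup fun _ hz => le_trans hz h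

theorem Tnorm.res_self (T : Tnorm) (a : I) : T.res a a = 1 := by
  apply le_antisymm unitInterval.le_one'
  apply le_sSup
  show T.mul 1 a ≤ a
  exact T.mul_le_right' 1 a

theorem Tnorm.le_of_res_eq_one (T : Tnorm) {a b : I} (h : T.res a b = 1) : a ≤ b := by
  have hne : {z : I | T.mul z a ≤ b}.Nonempty := by
    refine ⟨0, ?_⟩
    show T.mul 0 a ≤ b
    exact (T.mul_le_left' 0 a).trans unitInterval.nonneg'
  have h2 := T.left_continuous a _ hne
  change T.mul a (T.res a b) = _ at h2
  rw [h, T.mul_one] at h2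
  rw [h2]
  apply sSup_le
  rintro _ ⟨z, hz, rfl⟩
  rw [T.mul_comm]
  exact hz

theorem chain_sim (T : Tnorm) {S S' : Type} {Z : S → S' → Prop} {r : S → S → I}
    {r' : S' → S' → I}
    (hr : ∀ x x' y, Z x x' → 0 < r x y → ∃ y', Z y y' ∧ r x y ≤ r' x' y') :
    ∀ (l : List S) (x : S) (x' : S'), Z x x' → 0 < chainProd T r x l →
      ∃ l' : List S', Z (l.getLastD x) (l'.getLastD x') ∧
        chainProd T r x l ≤ chainProd T r' x' l' := by
  intro l
  induction l with
  | nil => intro x x' hz _; exact ⟨[], hz, le_refl _⟩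
  | cons y l ih =>
    intro x x' hz hp
    simp only [chainProd] at hp
    obtain ⟨y', hy', hle⟩ := hr x x' y hz (hp.trans_le (T.mul_le_left' _ _))
    obtain ⟨l', hl', hle'⟩ := ih y y' hy' (hp.trans_le (T.mul_le_right' _ _))
    refine ⟨y' :: l', ?_, ?_⟩
    · simpa only [List.getLastD_cons] using hl'
    · simp only [chainProd]; exact T.mul_le_mul hle hle'

mutual
theorem form_sim (T : Tnorm) {A P S S' : Type} (M : FLTS A P S) (M' : FLTS A P S')
    (hwM : WitnessedE T M) (Z : S → S' → Prop) (hZ : IsSimulation M M' Z) :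
    ∀ (φ : EForm A P) (x : S) (x' : S'), Z x x' → eformSem T M φ x ≤ eformSem T M' φ x'
  | .const a, x, x', _ => by simp only [eformSem]; exact le_refl _
  | .prop p, x, x', h => by simp only [eformSem]; exact hZ.1 x x' h p
  | .baaz φ, x, x', h => by
    have ih := form_sim T M M' hwM Z hZ φ x x' h
    simp only [eformSem]
    by_cases h1 : eformSem T M φ x = 1
    · have h2 : eformSem T M' φ x' = 1 := le_antisymm unitInterval.le_one' (h1 ▸ ih)
      simp [h1, h2]
    · rw [if_neg h1]; exact unitInterval.nonneg'
  | .and φ ψ, x, x', h => by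
    simp only [eformSem]
    exact min_le_min (form_sim T M M' hwM Z hZ φ x x' h) (form_sim T M M' hwM Z hZ ψ x x' h)
  | .or φ ψ, x, x', h => by
    simp only [eformSem]
    exact max_le_max (form_sim T M M' hwM Z hZ φ x x' h) (form_sim T M M' hwM Z hZ ψ x x' h)
  | .impl a φ, x, x', h => by
    simp only [eformSem]
    exact T.res_mono a (form_sim T M M' hwM Z hZ φ x x' h)
  | .dia α φ, x, x', h => by
    simp only [eformSem]
    apply iSup_le
    intro y
    by_cases hp : 0 < T.mul (eprogSem T M α x y) (eformSem T M φ y)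
    · obtain ⟨y', hy', hle⟩ := prog_sim T M M' hwM Z hZ α x x' y h
        (hp.trans_le (T.mul_le_left' _ _))
      exact (T.mul_le_mul hle (form_sim T M M' hwM Z hZ φ y y' hy')).trans
        (le_iSup (fun y' => T.mul (eprogSem T M' α x' y') (eformSem T M' φ y')) y')
    · exact (not_lt.mp hp).trans unitInterval.nonneg'
theorem prog_sim (T : Tnorm) {A P S S' : Type} (M : FLTS A P S) (M' : FLTS A P S')
    (hwM : WitnessedE T M) (Z : S → S' → Prop) (hZ : IsSimulation M M' Z) :
    ∀ (α : EProg A P) (x : S) (x' : S') (y : S), Z x x' → 0 < eprogSem T M α x y →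
      ∃ y', Z y y' ∧ eprogSem T M α x y ≤ eprogSem T M' α x' y'
  | .act ρ, x, x', y, h, hp => by
    simp only [eprogSem] at hp ⊢
    obtain ⟨y', h1, h2⟩ := hZ.2 x y x' ρ h hp
    exact ⟨y', h2, h1⟩
  | .comp α β, x, x', y, h, hp => by
    simp only [eprogSem] at hp ⊢
    obtain ⟨z, hz⟩ := hwM.2.1 α β x y
    have hsup := iSup_le hz
    have hp' := hp.trans_le hsup
    obtain ⟨z', hz', hle⟩ := prog_sim T M M' hwM Z hZ α x x' z h
      (hp'.trans_le (T.mul_le_left' _ _))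
    obtain ⟨y', hy', hle'⟩ := prog_sim T M M' hwM Z hZ β z z' y hz'
      (hp'.trans_le (T.mul_le_right' _ _))
    exact ⟨y', hy', hsup.trans ((T.mul_le_mul hle hle').trans
      (le_iSup (fun z' => T.mul (eprogSem T M' α x' z') (eprogSem T M' β z' y')) z'))⟩
  | .union α β, x, x', y, h, hp => by
    simp only [eprogSem] at hp ⊢
    rcases le_total (eprogSem T M α x y) (eprogSem T M β x y) with hc | hc
    · rw [max_eq_right hc] at hp ⊢
      obtain ⟨y', hy', hle⟩ := prog_sim T M M' hwM Z hZ β x x' y h hp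
      exact ⟨y', hy', hle.trans (le_max_right _ _)⟩
    · rw [max_eq_left hc] at hp ⊢
      obtain ⟨y', hy', hle⟩ := prog_sim T M M' hwM Z hZ α x x' y h hp
      exact ⟨y', hy', hle.trans (le_max_left _ _)⟩
  | .star α, x, x', y, h, hp => by
    simp only [eprogSem] at hp ⊢
    obtain ⟨l, hl, hmax⟩ := hwM.2.2 α x y
    have hsup : sSup {v : I | ∃ l : List S, l.getLastD x = y ∧
        v = chainProd T (eprogSem T M α) x l} ≤ chainProd T (eprogSem T M α) x l := by
      apply sSup_le
      rintro _ ⟨l', hl', rfl⟩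
      exact hmax l' hl'
    obtain ⟨l', hl', hle⟩ := chain_sim T (r' := eprogSem T M' α)
      (fun x x' y => prog_sim T M M' hwM Z hZ α x x' y) l x x' h (hp.trans_le hsup)
    rw [hl] at hl'
    exact ⟨_, hl', hsup.trans (hle.trans (le_sSup ⟨l', rfl, rfl⟩))⟩
  | .test φ, x, x', y, h, hp => by
    simp only [eprogSem] at hp ⊢
    by_cases hxy : x = y
    · subst hxy
      refine ⟨x', h, ?_⟩
      simp only [if_true]
      exact form_sim T M M' hwM Z hZ φ x x' h
    · rw [if_neg hxy] at hp
      exact absurd hp (lt_irrefl _)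
end

/-- The embedding of f∃ΔK^0 into f∃ΔPDL. -/
def KForm.toE {A P : Type} : KForm A P → EForm A P
  | .prop p => .prop p
  | .baaz φ => .baaz φ.toE
  | .and φ ψ => .and φ.toE ψ.toE
  | .impl a φ => .impl a φ.toE
  | .dia ρ φ => .dia (.act ρ) φ.toE

theorem toE_sem (T : Tnorm) {A P St : Type} (M : FLTS A P St) (φ : KForm A P) :
    ∀ x, eformSem T M φ.toE x = kSem T M φ x := by
  induction φ with
  | prop p => intro x; simp only [KForm.toE, eformSem, kSem]
  | baaz φ ih => intro x; simp only [KForm.toE, eformSem, kSem, ih]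
  | and φ ψ ih1 ih2 => intro x; simp only [KForm.toE, eformSem, kSem, ih1, ih2]
  | impl a φ ih => intro x; simp only [KForm.toE, eformSem, kSem, ih]
  | dia ρ φ ih => intro x; simp only [KForm.toE, eformSem, eprogSem, kSem, ih]

theorem witnessedK_of_E (T : Tnorm) {A P St : Type} (M : FLTS A P St) (h : WitnessedE T M) :
    WitnessedK T M := by
  intro φ ρ x
  have := h.1 (.act ρ) φ.toE x
  simpa only [eprogSem, toE_sem] using this

theorem exists_conj (T : Tnorm) {A P : Type} [Nonempty P] (Ψ : Finset (KForm A P))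
    (φ₀ : KForm A P) : ∃ χ : KForm A P,
      ∀ (St : Type) (M : FLTS A P St) (y : St),
        kSem T M χ y = min (kSem T M φ₀ y) (Ψ.inf fun φ => kSem T M φ y) := by
  induction Ψ using Finset.induction_on with
  | empty =>
    refine ⟨φ₀, fun St M y => ?_⟩
    rw [Finset.inf_empty]
    exact (min_eq_left le_top).symm
  | insert ψ Ψ hψ ih =>
    obtain ⟨χ, hχ⟩ := ih
    refine ⟨.and ψ χ, fun St M y => ?_⟩
    rw [Finset.inf_insert]
    simp only [kSem, hχ]
    exact min_left_comm _ _ _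

theorem kform_infinite {A P : Type} [Nonempty P] : Infinite (KForm A P) := by
  obtain ⟨p⟩ := ‹Nonempty P›
  have hI : Infinite I := Set.infinite_coe_iff.mpr (Set.Icc_infinite (zero_lt_one' ℝ))
  apply Infinite.of_injective (fun a : I => (KForm.impl a (.prop p) : KForm A P))
  intro a b h
  simpa using h

theorem kSem_baaz_pos (T : Tnorm) {A P St : Type} (M : FLTS A P St) {φ : KForm A P} {x : St}
    (h : 0 < kSem T M (.baaz φ) x) : kSem T M φ x = 1 := by
  by_contra h2
  rw [kSem, if_neg h2] at h
  exact absurd h (lt_irrefl _)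

theorem k_sim (T : Tnorm) {A P S S' : Type} [Nonempty P] (M : FLTS A P S) (M' : FLTS A P S')
    (hw : WitnessedK T M') (hs : ModallySaturated T M') :
    IsSimulation M M' (fun x x' => ∀ φ : KForm A P, kSem T M φ x ≤ kSem T M' φ x') := by
  constructor
  · intro x x' h p
    simpa only [kSem] using h (.prop p)
  · intro x y x' ρ h hpos
    let f : KForm A P → KForm A P := fun φ => .baaz (.impl (kSem T M φ y) φ)
    have hf : Function.Injective f := by
      intro a b hab
      simp only [f, KForm.baaz.injEq, KForm.impl.injEq] at hab
      exact hab.2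
    have hfy : ∀ φ, kSem T M (f φ) y = 1 := by
      intro φ
      simp only [f, kSem, T.res_self, if_true]
    have hinf : (Set.range f).Infinite := by
      have : Infinite (KForm A P) := kform_infinite
      exact Set.infinite_range_of_injective hf
    obtain ⟨p₀⟩ := ‹Nonempty P›
    obtain ⟨y', hy', hall⟩ := hs x' (M.delta x ρ y) ρ (Set.range f) hpos hinf (by
      intro Ψ hΨ
      have : Nonempty P := ⟨p₀⟩
      obtain ⟨χ, hχ⟩ := exists_conj T Ψ (f (.prop p₀))
      have hχy : kSem T M χ y = 1 := by
        rw [hχ, hfy]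
        apply le_antisymm unitInterval.le_one'
        apply le_min le_rfl
        apply Finset.le_inf
        intro φ hφ
        obtain ⟨ψ, rfl⟩ := hΨ hφ
        exact (hfy ψ).ge
      have h1 : M.delta x ρ y ≤ kSem T M (.dia ρ χ) x := by
        simp only [kSem]
        have := le_iSup (fun y => T.mul (M.delta x ρ y) (kSem T M χ y)) y
        simp only [hχy, T.mul_one] at this
        exact this
      obtain ⟨y', hy'⟩ := hw χ ρ x'
      refine ⟨y', (h1.trans (h (.dia ρ χ))).trans ?_⟩
      simp only [kSem]
      refine (iSup_le hy').trans (T.mul_le_mul le_rfl ?_)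
      rw [hχ]
      exact min_le_right _ _)
    refine ⟨y', hy', fun φ => ?_⟩
    have h1 := hall (f φ) ⟨φ, rfl⟩
    exact T.le_of_res_eq_one (kSem_baaz_pos T M' h1)

/-- For FLTSs witnessed w.r.t. f∃ΔPDL and modally saturated w.r.t. f∃ΔK^0,
the following are equivalent: (i) `x ≤^∃ x'` (w.r.t. all f∃ΔPDL formulas),
(ii) there is a crisp simulation linking `x` to `x'`,
(iii) `x ≤^{∃,0}_K x'` (w.r.t. all f∃ΔK^0 formulas). -/
theorem simulation_characterization_fePDL_feK0
    {A P S S' : Type} [Nonempty A] [Nonempty P] [Nonempty S] [Nonempty S']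
    (T : Tnorm) (M : FLTS A P S) (M' : FLTS A P S')
    (hwM : WitnessedE T M) (hwM' : WitnessedE T M')
    (hsM : ModallySaturated T M) (hsM' : ModallySaturated T M')
    (x : S) (x' : S') :
    ((∀ φ : EForm A P, eformSem T M φ x ≤ eformSem T M' φ x') ↔
      (∃ Z : S → S' → Prop, IsSimulation M M' Z ∧ Z x x')) ∧
    ((∃ Z : S → S' → Prop, IsSimulation M M' Z ∧ Z x x') ↔
      (∀ φ : KForm A P, kSem T M φ x ≤ kSem T M' φ x')) := by
  have h23 : (∃ Z : S → S' → Prop, IsSimulation M M' Z ∧ Z x x') →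
      ∀ φ : EForm A P, eformSem T M φ x ≤ eformSem T M' φ x' := by
    rintro ⟨Z, hZ, hx⟩ φ
    exact form_sim T M M' hwM Z hZ φ x x' hx
  have h31 : (∀ φ : EForm A P, eformSem T M φ x ≤ eformSem T M' φ x') →
      ∀ φ : KForm A P, kSem T M φ x ≤ kSem T M' φ x' := by
    intro h φ
    simpa only [toE_sem] using h φ.toE
  have h12 : (∀ φ : KForm A P, kSem T M φ x ≤ kSem T M' φ x') →
      ∃ Z : S → S' → Prop, IsSimulation M M' Z ∧ Z x x' := fun h =>
    ⟨_, k_sim T M M' (witnessedK_of_E T M' hwM') hsM', h⟩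
  exact ⟨⟨fun h => h12 (h31 h), h23⟩, ⟨fun h => h31 (h23 h), h12⟩⟩
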